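/- arXiv:2505.11284 — 2 statements merged into one kernel-verified Lean document; each statement's English description precedes it below -/
import Mathlib

section
/- Let a, b ∈ ℕ with b > 4a + 4 and take α ≡ 1, so that φ(x) = 1 − x₁x₂^a. Then for every ε ∈ (0,1) there exist τ > 0 and a horizontal curve ω : [0,τ] → M with ω(0) = (0,0,0), ω(τ) = (0,ε,0), and sub-Riemannian length L(ω) < ε. Consequently, the curve γ(t) = (0,t,0) is not locally length-minimizing at t = 0. -/
open Set MeasureTheory

/-!
The curve starts with the parabola `x₁ = c x₂ (s - x₂)` over `[0, s]`. Its length is at most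
`s + c² s³ / 6 - (c / 2) s ^ (a + 3) / ((a + 2) (a + 3))`, so for `c` proportional to `s ^ a` it is
shorter than `s` by an amount of order `s ^ (2a + 3)`, at the price of an error of order
`s ^ (2a + b + 5)` in `x₃`. The curve then follows the `x₂`-axis up to `x₂ = ε`, where a rectangular
loop with sides of order `r` lowers `x₃` by an amount of order `r³`. Removing the error therefore
costs a length of order `s ^ ((2a + b + 5) / 3)`, which for small `s` is less than what was gained
precisely when `2a + b + 5 > 3 (2a + 3)`, that is `b > 4a + 4`.
-/

/-! ### Elementary inequalities and integrals -/

lemma sub_mul_pow_le_pow_succ_sub_pow_succ {x y : ℝ} (hx : 0 ≤ x) (hxy : x ≤ y) (n : ℕ) :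
    (y - x) * y ^ n ≤ y ^ (n + 1) - x ^ (n + 1) := by
  have hpow : x * x ^ n ≤ x * y ^ n := by gcongr
  linear_combination hpow

lemma exists_sq_mul_eq {z D r : ℝ} (hz : 0 ≤ z) (hD : 0 < D) (hr : 0 ≤ r) (hzr : z ≤ r ^ 2 * D) :
    ∃ k ∈ Icc 0 r, k ^ 2 * D = z := by
  refine ⟨√(z / D), ⟨Real.sqrt_nonneg _, ?_⟩, ?_⟩
  · exact Real.sqrt_le_iff.2 ⟨hr, (div_le_iff₀ hD).2 hzr⟩
  · rw [Real.sq_sqrt (by positivity), div_mul_cancel₀ z hD.ne']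

lemma exists_mem_Ioo_pow_le_mul_pow {m n : ℕ} (hmn : m < n) {ε C : ℝ} (hε : 0 < ε) (hC : 0 < C) :
    ∃ s ∈ Ioo 0 ε, s ^ n ≤ C * s ^ m := by
  have hsmall : ∀ᶠ s : ℝ in nhdsWithin 0 (Ioi 0), ‖s ^ n‖ ≤ C * ‖s ^ m‖ :=
    ((Asymptotics.isLittleO_pow_pow hmn).def hC).filter_mono nhdsWithin_le_nhds
  obtain ⟨s, hs, hsε⟩ := (hsmall.and (Ioo_mem_nhdsGT hε)).exists
  have hs0 : 0 ≤ s := hsε.1.le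
  exact ⟨s, hsε, by simpa [abs_of_nonneg hs0] using hs⟩

lemma integral_sub_two_mul_sq (s : ℝ) : ∫ t in 0..s, (s - 2 * t) ^ 2 = s ^ 3 / 3 := by
  rw [intervalIntegral.integral_comp_sub_mul (fun t ↦ t ^ 2) two_ne_zero s, integral_pow]
  simp only [smul_eq_mul]
  push_cast
  ring

lemma integral_mul_sub_mul_pow (s : ℝ) (n : ℕ) :
    ∫ t in 0..s, t * (s - t) * t ^ n = s ^ (n + 3) / ((n + 2) * (n + 3)) := by
  have hsplit : ∀ t : ℝ, t * (s - t) * t ^ n = s * t ^ (n + 1) - t ^ (n + 2) := fun t ↦ by ring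
  simp only [hsplit]
  rw [intervalIntegral.integral_sub (Continuous.intervalIntegrable (by fun_prop) _ _)
    (Continuous.intervalIntegrable (by fun_prop) _ _), intervalIntegral.integral_const_mul,
    integral_pow, integral_pow]
  push_cast
  field_simp
  ring

lemma integral_parabola_energy (a : ℕ) (s c : ℝ) :
    ∫ t in 0..s, (1 + (c * (s - 2 * t)) ^ 2 + (1 - c * (t * (s - t)) * t ^ a)) / 2 =
      s + c ^ 2 * s ^ 3 / 6 - c / 2 * (s ^ (a + 3) / ((a + 2) * (a + 3))) := by
  have hsplit : ∀ t : ℝ, (1 + (c * (s - 2 * t)) ^ 2 + (1 - c * (t * (s - t)) * t ^ a)) / 2 =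
      1 + c ^ 2 / 2 * (s - 2 * t) ^ 2 - c / 2 * (t * (s - t) * t ^ a) := fun t ↦ by ring
  simp only [hsplit]
  rw [intervalIntegral.integral_sub (Continuous.intervalIntegrable (by fun_prop) _ _)
    (Continuous.intervalIntegrable (by fun_prop) _ _),
    intervalIntegral.integral_add (Continuous.intervalIntegrable (by fun_prop) _ _)
    (Continuous.intervalIntegrable (by fun_prop) _ _), intervalIntegral.integral_const_mul,
    intervalIntegral.integral_const_mul, integral_sub_two_mul_sq, integral_mul_sub_mul_pow,
    intervalIntegral.integral_const, smul_eq_mul]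
  ring

lemma parabola_mem_Icc {s t : ℝ} (ht : t ∈ Icc 0 s) : t * (s - t) ∈ Icc 0 (s ^ 2 / 4) :=
  ⟨mul_nonneg ht.1 (sub_nonneg.2 ht.2), by linarith [sq_nonneg (s - 2 * t)]⟩

lemma integral_parabola_sq_mul_pow_mem_Icc {s : ℝ} (hs : 0 ≤ s) (c : ℝ) (b : ℕ) :
    ∫ t in 0..s, (c * (t * (s - t))) ^ 2 * t ^ b ∈ Icc 0 (c ^ 2 * s ^ (b + 5)) := by
  constructor
  · exact intervalIntegral.integral_nonneg hs fun t ht ↦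
      mul_nonneg (sq_nonneg _) (pow_nonneg ht.1 b)
  · have hbound : ∀ t ∈ Icc 0 s, (c * (t * (s - t))) ^ 2 * t ^ b ≤ c ^ 2 * s ^ (b + 4) := by
      intro t ht
      obtain ⟨h0, h1⟩ := parabola_mem_Icc ht
      have ht0 : 0 ≤ t := ht.1
      calc (c * (t * (s - t))) ^ 2 * t ^ b = c ^ 2 * (t * (s - t)) ^ 2 * t ^ b := by ring
        _ ≤ c ^ 2 * (s ^ 2) ^ 2 * s ^ b := by
          gcongr
          · linarith [sq_nonneg s]
          · exact ht.2
        _ = c ^ 2 * s ^ (b + 4) := by ring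
    calc ∫ t in 0..s, (c * (t * (s - t))) ^ 2 * t ^ b ≤ ∫ _ in 0..s, c ^ 2 * s ^ (b + 4) :=
          intervalIntegral.integral_mono_on hs (Continuous.intervalIntegrable (by fun_prop) _ _)
            intervalIntegrable_const hbound
      _ = c ^ 2 * s ^ (b + 5) := by
          rw [intervalIntegral.integral_const, smul_eq_mul]
          ring

/-! ### Concatenation of primitives -/

/-- The function equal to `f` up to time `T`, followed by `g` started at time `T`. -/
noncomputable def concatAt {E : Type*} (T : ℝ) (f g : ℝ → E) (t : ℝ) : E :=
  if t ≤ T then f t else g (t - T)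

section concatAt

variable {E : Type*} {T S t : ℝ} {f g : ℝ → E}

lemma concatAt_of_le (h : t ≤ T) : concatAt T f g t = f t := if_pos h

lemma concatAt_of_lt (h : T < t) : concatAt T f g t = g (t - T) := if_neg h.not_ge

lemma concatAt_add (h : 0 < t) : concatAt T f g (T + t) = g t := by
  rw [concatAt_of_lt (by linarith), add_sub_cancel_left]

variable [NormedAddCommGroup E]

lemma intervalIntegrable_concatAt_left (hT : 0 ≤ T) (hf : IntervalIntegrable f volume 0 T) :
    IntervalIntegrable (concatAt T f g) volume 0 T :=
  hf.congr fun _ ht ↦ (concatAt_of_le (uIoc_of_le hT ▸ ht).2).symm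

lemma intervalIntegrable_concatAt_right (hS : 0 ≤ S) (hg : IntervalIntegrable g volume 0 S) :
    IntervalIntegrable (concatAt T f g) volume T (T + S) := by
  have hshift : IntervalIntegrable (fun t ↦ g (t - T)) volume T (T + S) := by
    simpa only [zero_add, add_comm S T] using hg.comp_sub_right T
  refine hshift.congr fun t ht ↦ ?_
  rw [uIoc_of_le (by linarith)] at ht
  exact (concatAt_of_lt ht.1).symm

lemma intervalIntegrable_concatAt (hT : 0 ≤ T) (hS : 0 ≤ S) (hf : IntervalIntegrable f volume 0 T)
    (hg : IntervalIntegrable g volume 0 S) :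
    IntervalIntegrable (concatAt T f g) volume 0 (T + S) :=
  (intervalIntegrable_concatAt_left hT hf).trans (intervalIntegrable_concatAt_right hS hg)

variable [NormedSpace ℝ E]

lemma integral_concatAt_of_le (ht : 0 ≤ t) (htT : t ≤ T) :
    ∫ s in 0..t, concatAt T f g s = ∫ s in 0..t, f s :=
  intervalIntegral.integral_congr fun _ hs ↦ concatAt_of_le ((uIcc_of_le ht ▸ hs).2.trans htT)

lemma integral_concatAt_right (ht : 0 ≤ t) :
    ∫ s in T..T + t, concatAt T f g s = ∫ s in 0..t, g s := by
  have hshift : ∫ s in T..T + t, concatAt T f g s = ∫ s in T..T + t, g (s - T) := by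
    refine intervalIntegral.integral_congr_ae (ae_of_all _ fun s hs ↦ ?_)
    rw [uIoc_of_le (by linarith)] at hs
    exact concatAt_of_lt hs.1
  rw [hshift, intervalIntegral.integral_comp_sub_right g T, sub_self, add_sub_cancel_left]

lemma integral_concatAt_add (hT : 0 ≤ T) (ht : 0 ≤ t) (hf : IntervalIntegrable f volume 0 T)
    (hg : IntervalIntegrable g volume 0 t) :
    ∫ s in 0..T + t, concatAt T f g s = (∫ s in 0..T, f s) + ∫ s in 0..t, g s := by
  rw [← intervalIntegral.integral_add_adjacent_intervals
    (intervalIntegrable_concatAt_left hT hf) (intervalIntegrable_concatAt_right ht hg),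
    integral_concatAt_of_le hT le_rfl, integral_concatAt_right ht]

end concatAt

/-- `w` is absolutely continuous on `[0, τ]` with derivative `u`, encoded by the integrability of
`u` and the fundamental theorem of calculus. -/
structure IsPrimitiveUpTo {E : Type*} [NormedAddCommGroup E] [NormedSpace ℝ E] (τ : ℝ)
    (w u : ℝ → E) : Prop where
  intervalIntegrable : IntervalIntegrable u volume 0 τ
  eq_add_integral : ∀ t ∈ Icc 0 τ, w t = w 0 + ∫ s in 0..t, u s

namespace IsPrimitiveUpTo

variable {E : Type*} [NormedAddCommGroup E] [NormedSpace ℝ E]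

lemma concatAt {T S : ℝ} {w w' u u' : ℝ → E} (h : IsPrimitiveUpTo T w u)
    (h' : IsPrimitiveUpTo S w' u') (hT : 0 ≤ T) (hS : 0 ≤ S) (hjoin : w T = w' 0) :
    IsPrimitiveUpTo (T + S) (concatAt T w w') (concatAt T u u') where
  intervalIntegrable :=
    intervalIntegrable_concatAt hT hS h.intervalIntegrable h'.intervalIntegrable
  eq_add_integral t ht := by
    rw [concatAt_of_le hT]
    rcases le_or_gt t T with htT | hTt
    · rw [concatAt_of_le htT, integral_concatAt_of_le ht.1 htT, h.eq_add_integral t ⟨ht.1, htT⟩]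
    · obtain ⟨r, rfl⟩ : ∃ r, t = T + r := ⟨t - T, by ring⟩
      have hr : r ∈ Ioc 0 S := ⟨by linarith, by linarith [ht.2]⟩
      have hu' : IntervalIntegrable u' volume 0 r :=
        h'.intervalIntegrable.mono_set
          (uIcc_subset_uIcc_left (uIcc_of_le hS ▸ Ioc_subset_Icc_self hr))
      rw [concatAt_add hr.1, integral_concatAt_add hT hr.1.le h.intervalIntegrable hu',
        ← add_assoc, ← h.eq_add_integral T (right_mem_Icc.2 hT), hjoin,
        h'.eq_add_integral r (Ioc_subset_Icc_self hr)]

lemma of_hasDerivAt [CompleteSpace E] {τ : ℝ} {w u : ℝ → E} (hw : ∀ t, HasDerivAt w (u t) t)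
    (hu : Continuous u) :
    IsPrimitiveUpTo τ w u where
  intervalIntegrable := hu.intervalIntegrable _ _
  eq_add_integral t _ := by
    rw [intervalIntegral.integral_eq_sub_of_hasDerivAt (fun s _ ↦ hw s)
      (hu.intervalIntegrable _ _), add_sub_cancel]

end IsPrimitiveUpTo

/-! ### Horizontal curves over a planar domain -/

/-- The rank-two sub-Riemannian structure on `domain × ℝ` with horizontal distribution
`dx₃ = ψ(x₁, x₂) dx₂` and metric `dx₁² + φ(x₁, x₂) dx₂²`. Positivity of `φ` on `domain` is not built
in; `speed` has the junk value `0` where the quadratic form is negative. -/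
structure SubRiemannianStructure where
  domain : Set (ℝ × ℝ)
  φ : ℝ × ℝ → ℝ
  ψ : ℝ × ℝ → ℝ
  continuous_φ : Continuous φ
  continuous_ψ : Continuous ψ

namespace SubRiemannianStructure

attribute [fun_prop] continuous_φ continuous_ψ

variable (M : SubRiemannianStructure)

/-- The sub-Riemannian norm of the horizontal vector over `(x₁, x₂)` with components `u₁`, `u₂`. -/
noncomputable def speed (x₁ x₂ u₁ u₂ : ℝ) : ℝ := √(u₁ ^ 2 + M.φ (x₁, x₂) * u₂ ^ 2)

@[fun_prop]
lemma continuous_speed {f g f' g' : ℝ → ℝ} (hf : Continuous f) (hg : Continuous g)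
    (hf' : Continuous f') (hg' : Continuous g') :
    Continuous fun t ↦ M.speed (f t) (g t) (f' t) (g' t) := by
  unfold speed
  fun_prop

lemma speed_one_le {x₁ x₂ u₁ : ℝ} (hφ : 0 ≤ M.φ (x₁, x₂)) :
    M.speed x₁ x₂ u₁ 1 ≤ (1 + u₁ ^ 2 + M.φ (x₁, x₂)) / 2 := by
  refine Real.sqrt_le_iff.2 ⟨by positivity, ?_⟩
  linarith [sq_nonneg ((u₁ ^ 2 + M.φ (x₁, x₂) - 1) / 2)]

lemma speed_zero_le_abs {x₁ x₂ u₂ : ℝ} (hφ : M.φ (x₁, x₂) ≤ 1) : M.speed x₁ x₂ 0 u₂ ≤ |u₂| := by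
  rw [← Real.sqrt_sq_eq_abs]
  refine Real.sqrt_le_sqrt ?_
  linarith [mul_le_of_le_one_left (sq_nonneg u₂) hφ]

/-- A horizontal curve `(x₁, x₂, x₃)` of finite length, defined on `[0, duration]` and driven by the
controls `u₁ = x₁'` and `u₂ = x₂'`. -/
structure HorizontalCurve where
  duration : ℝ
  duration_pos : 0 < duration
  x₁ : ℝ → ℝ
  x₂ : ℝ → ℝ
  x₃ : ℝ → ℝ
  u₁ : ℝ → ℝ
  u₂ : ℝ → ℝ
  isPrimitive₁ : IsPrimitiveUpTo duration x₁ u₁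
  isPrimitive₂ : IsPrimitiveUpTo duration x₂ u₂
  isPrimitive₃ : IsPrimitiveUpTo duration x₃ fun t ↦ M.ψ (x₁ t, x₂ t) * u₂ t
  mem_domain : ∀ t ∈ Icc 0 duration, (x₁ t, x₂ t) ∈ M.domain
  intervalIntegrable_speed :
    IntervalIntegrable (fun t ↦ M.speed (x₁ t) (x₂ t) (u₁ t) (u₂ t)) volume 0 duration

namespace HorizontalCurve

variable {M} (ω η : M.HorizontalCurve)

/-- The initial point of a horizontal curve. -/
def source : ℝ × ℝ × ℝ := (ω.x₁ 0, ω.x₂ 0, ω.x₃ 0)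

/-- The final point of a horizontal curve. -/
def target : ℝ × ℝ × ℝ := (ω.x₁ ω.duration, ω.x₂ ω.duration, ω.x₃ ω.duration)

/-- The sub-Riemannian length of a horizontal curve. -/
noncomputable def length : ℝ :=
  ∫ t in 0..ω.duration, M.speed (ω.x₁ t) (ω.x₂ t) (ω.u₁ t) (ω.u₂ t)

lemma source_eq_iff {p₁ p₂ p₃ : ℝ} :
    ω.source = (p₁, p₂, p₃) ↔ ω.x₁ 0 = p₁ ∧ ω.x₂ 0 = p₂ ∧ ω.x₃ 0 = p₃ := by
  simp only [source, Prod.mk.injEq]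

lemma target_eq_iff {q₁ q₂ q₃ : ℝ} :
    ω.target = (q₁, q₂, q₃) ↔
      ω.x₁ ω.duration = q₁ ∧ ω.x₂ ω.duration = q₂ ∧ ω.x₃ ω.duration = q₃ := by
  simp only [target, Prod.mk.injEq]

lemma ψ_concatAt (T : ℝ) :
    (fun t ↦ M.ψ (concatAt T ω.x₁ η.x₁ t, concatAt T ω.x₂ η.x₂ t) * concatAt T ω.u₂ η.u₂ t) =
      concatAt T (fun t ↦ M.ψ (ω.x₁ t, ω.x₂ t) * ω.u₂ t)
        (fun t ↦ M.ψ (η.x₁ t, η.x₂ t) * η.u₂ t) := by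
  funext t
  simp only [concatAt]
  split_ifs <;> rfl

lemma speed_concatAt (T : ℝ) :
    (fun t ↦ M.speed (concatAt T ω.x₁ η.x₁ t) (concatAt T ω.x₂ η.x₂ t)
      (concatAt T ω.u₁ η.u₁ t) (concatAt T ω.u₂ η.u₂ t)) =
      concatAt T (fun t ↦ M.speed (ω.x₁ t) (ω.x₂ t) (ω.u₁ t) (ω.u₂ t))
        (fun t ↦ M.speed (η.x₁ t) (η.x₂ t) (η.u₁ t) (η.u₂ t)) := by
  funext t
  simp only [concatAt]
  split_ifs <;> rfl

/-- The concatenation of two horizontal curves. -/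
noncomputable def trans (h : ω.target = η.source) : M.HorizontalCurve where
  duration := ω.duration + η.duration
  duration_pos := add_pos ω.duration_pos η.duration_pos
  x₁ := concatAt ω.duration ω.x₁ η.x₁
  x₂ := concatAt ω.duration ω.x₂ η.x₂
  x₃ := concatAt ω.duration ω.x₃ η.x₃
  u₁ := concatAt ω.duration ω.u₁ η.u₁
  u₂ := concatAt ω.duration ω.u₂ η.u₂
  isPrimitive₁ := ω.isPrimitive₁.concatAt η.isPrimitive₁ ω.duration_pos.le η.duration_pos.le
    (ω.target_eq_iff.1 h).1
  isPrimitive₂ := ω.isPrimitive₂.concatAt η.isPrimitive₂ ω.duration_pos.le η.duration_pos.le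
    (ω.target_eq_iff.1 h).2.1
  isPrimitive₃ := by
    rw [ψ_concatAt]
    exact ω.isPrimitive₃.concatAt η.isPrimitive₃ ω.duration_pos.le η.duration_pos.le
      (ω.target_eq_iff.1 h).2.2
  mem_domain t ht := by
    rcases le_or_gt t ω.duration with hle | hlt
    · simpa only [concatAt_of_le hle] using ω.mem_domain t ⟨ht.1, hle⟩
    · simpa only [concatAt_of_lt hlt] using
        η.mem_domain (t - ω.duration) ⟨by linarith, by linarith [ht.2]⟩
  intervalIntegrable_speed := by
    rw [speed_concatAt]
    exact intervalIntegrable_concatAt ω.duration_pos.le η.duration_pos.le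
      ω.intervalIntegrable_speed η.intervalIntegrable_speed

variable {ω η}

lemma source_trans (h : ω.target = η.source) : (ω.trans η h).source = ω.source := by
  simp only [source, trans, concatAt_of_le ω.duration_pos.le]

lemma target_trans (h : ω.target = η.source) : (ω.trans η h).target = η.target := by
  simp only [target, trans, concatAt_add η.duration_pos]

lemma length_trans (h : ω.target = η.source) :
    (ω.trans η h).length = ω.length + η.length := by
  simp only [length, trans, speed_concatAt]
  exact integral_concatAt_add ω.duration_pos.le η.duration_pos.le
    ω.intervalIntegrable_speed η.intervalIntegrable_speed

end HorizontalCurve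

/-- `q` is joined to `p` by a horizontal curve of length at most `l`. -/
def ReachableWithin (l : ℝ) (p q : ℝ × ℝ × ℝ) : Prop :=
  ∃ ω : M.HorizontalCurve, ω.source = p ∧ ω.target = q ∧ ω.length ≤ l

variable {M}

lemma ReachableWithin.mono {l l' : ℝ} {p q : ℝ × ℝ × ℝ} (h : M.ReachableWithin l p q)
    (hl : l ≤ l') : M.ReachableWithin l' p q :=
  let ⟨ω, hsource, htarget, hlength⟩ := h
  ⟨ω, hsource, htarget, hlength.trans hl⟩

lemma ReachableWithin.trans {l l' : ℝ} {p q r : ℝ × ℝ × ℝ} (h : M.ReachableWithin l p q)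
    (h' : M.ReachableWithin l' q r) : M.ReachableWithin (l + l') p r := by
  obtain ⟨ω, rfl, hjoin, hω⟩ := h
  obtain ⟨η, hjoin', rfl, hη⟩ := h'
  have hωη : ω.target = η.source := hjoin.trans hjoin'.symm
  exact ⟨ω.trans η hωη, HorizontalCurve.source_trans hωη, HorizontalCurve.target_trans hωη,
    (HorizontalCurve.length_trans hωη).trans_le (add_le_add hω hη)⟩

lemma reachableWithin_of_hasDerivAt {α β z : ℝ} {f g f' g' : ℝ → ℝ} (hαβ : α < β)
    (hf : ∀ t, HasDerivAt f (f' t) t) (hg : ∀ t, HasDerivAt g (g' t) t)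
    (hf' : Continuous f') (hg' : Continuous g')
    (hmem : ∀ t ∈ Icc α β, (f t, g t) ∈ M.domain) :
    M.ReachableWithin (∫ t in α..β, M.speed (f t) (g t) (f' t) (g' t)) (f α, g α, z)
      (f β, g β, z + ∫ t in α..β, M.ψ (f t, g t) * g' t) := by
  have hfc : Continuous f := continuous_iff_continuousAt.2 fun t ↦ (hf t).continuousAt
  have hgc : Continuous g := continuous_iff_continuousAt.2 fun t ↦ (hg t).continuousAt
  refine ⟨{
    duration := β - α
    duration_pos := sub_pos.2 hαβ
    x₁ t := f (t + α)
    x₂ t := g (t + α)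
    x₃ t := z + ∫ s in 0..t, M.ψ (f (s + α), g (s + α)) * g' (s + α)
    u₁ t := f' (t + α)
    u₂ t := g' (t + α)
    isPrimitive₁ := .of_hasDerivAt (fun t ↦ (hf _).comp_add_const t α) (by fun_prop)
    isPrimitive₂ := .of_hasDerivAt (fun t ↦ (hg _).comp_add_const t α) (by fun_prop)
    isPrimitive₃ := ⟨Continuous.intervalIntegrable (by fun_prop) _ _, fun t _ ↦ by simp⟩
    mem_domain := fun t ht ↦ hmem (t + α) ⟨by linarith [ht.1], by linarith [ht.2]⟩
    intervalIntegrable_speed := Continuous.intervalIntegrable (by fun_prop) _ _ }, ?_, ?_, ?_⟩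
  · simp [HorizontalCurve.source]
  · simp [HorizontalCurve.target,
      intervalIntegral.integral_comp_add_right fun s ↦ M.ψ (f s, g s) * g' s]
  · simp [HorizontalCurve.length,
      intervalIntegral.integral_comp_add_right fun s ↦ M.speed (f s) (g s) (f' s) (g' s)]

lemma reachableWithin_graph {p q z : ℝ} {f f' : ℝ → ℝ} (hpq : p < q)
    (hf : ∀ t, HasDerivAt f (f' t) t) (hf' : Continuous f')
    (hmem : ∀ t ∈ Icc p q, (f t, t) ∈ M.domain) (hφ : ∀ t ∈ Icc p q, 0 ≤ M.φ (f t, t)) :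
    M.ReachableWithin (∫ t in p..q, (1 + f' t ^ 2 + M.φ (f t, t)) / 2) (f p, p, z)
      (f q, q, z + ∫ t in p..q, M.ψ (f t, t)) := by
  have hfc : Continuous f := continuous_iff_continuousAt.2 fun t ↦ (hf t).continuousAt
  have hcurve := reachableWithin_of_hasDerivAt (z := z) hpq hf hasDerivAt_id hf'
    continuous_const hmem
  simp only [id, mul_one] at hcurve
  refine hcurve.mono (intervalIntegral.integral_mono_on hpq.le ?_ ?_ fun t ht ↦
    M.speed_one_le (hφ t ht)) <;>
  exact Continuous.intervalIntegrable (by fun_prop) _ _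

lemma reachableWithin_segment₁ {p q y z : ℝ} (hconv : Convex ℝ M.domain)
    (hp : (p, y) ∈ M.domain) (hq : (q, y) ∈ M.domain) :
    M.ReachableWithin |q - p| (p, y, z) (q, y, z) := by
  have hmem : ∀ t ∈ Icc (0 : ℝ) 1, (AffineMap.lineMap p q t, y) ∈ M.domain := fun t ht ↦ by
    simpa [AffineMap.lineMap_apply] using hconv.lineMap_mem hp hq ht
  simpa [speed, Real.sqrt_sq_eq_abs] using
    reachableWithin_of_hasDerivAt (z := z) zero_lt_one
      (fun _ ↦ AffineMap.hasDerivAt_lineMap) (fun t ↦ hasDerivAt_const t y)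
      continuous_const continuous_const hmem

lemma reachableWithin_segment₂ {x p q z : ℝ} (hconv : Convex ℝ M.domain)
    (hp : (x, p) ∈ M.domain) (hq : (x, q) ∈ M.domain) (hφ : ∀ y ∈ uIcc p q, M.φ (x, y) ≤ 1) :
    M.ReachableWithin |q - p| (x, p, z) (x, q, z + ∫ y in p..q, M.ψ (x, y)) := by
  have hmem : ∀ t ∈ Icc (0 : ℝ) 1, (x, AffineMap.lineMap p q t) ∈ M.domain := fun t ht ↦ by
    simpa [AffineMap.lineMap_apply] using hconv.lineMap_mem hp hq ht
  have hcurve := reachableWithin_of_hasDerivAt (z := z) zero_lt_one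
    (fun t ↦ hasDerivAt_const t x) (fun _ ↦ AffineMap.hasDerivAt_lineMap)
    continuous_const continuous_const hmem
  have hψ : ∫ t in (0 : ℝ)..1, M.ψ (x, AffineMap.lineMap p q t) * (q - p) =
      ∫ y in p..q, M.ψ (x, y) := by
    simpa [AffineMap.lineMap_apply, mul_comm, add_comm] using
      intervalIntegral.mul_integral_comp_add_mul (a := 0) (b := 1) (f := fun y ↦ M.ψ (x, y))
        (q - p) p
  have hlength : ∫ t in (0 : ℝ)..1, M.speed x (AffineMap.lineMap p q t) 0 (q - p) ≤ |q - p| := by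
    have hspeed : ∀ t ∈ Icc (0 : ℝ) 1,
        M.speed x (AffineMap.lineMap p q t) 0 (q - p) ≤ |q - p| := fun t ht ↦
      M.speed_zero_le_abs (hφ _ (segment_eq_uIcc p q ▸ lineMap_mem_segment ℝ p q ht))
    simpa using intervalIntegral.integral_mono_on (μ := volume) zero_le_one
      (Continuous.intervalIntegrable (by fun_prop) 0 1) intervalIntegrable_const hspeed
  simpa [hψ] using hcurve.mono hlength

lemma reachableWithin_rectangle {x x' y y' z : ℝ} (hconv : Convex ℝ M.domain)
    (hxy : (x, y) ∈ M.domain) (hx'y : (x', y) ∈ M.domain)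
    (hxy' : (x, y') ∈ M.domain) (hx'y' : (x', y') ∈ M.domain)
    (hφ : ∀ v ∈ uIcc y y', M.φ (x, v) ≤ 1) (hφ' : ∀ v ∈ uIcc y y', M.φ (x', v) ≤ 1) :
    M.ReachableWithin (2 * |x' - x| + 2 * |y' - y|) (x, y, z)
      (x, y, z + (∫ v in y..y', M.ψ (x', v)) - ∫ v in y..y', M.ψ (x, v)) := by
  have hloop := (((reachableWithin_segment₁ (z := z) hconv hxy hx'y).trans
    (reachableWithin_segment₂ hconv hx'y hx'y' hφ')).trans
    (reachableWithin_segment₁ hconv hx'y' hxy')).trans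
    (reachableWithin_segment₂ hconv hxy' hxy (uIcc_comm y y' ▸ hφ))
  rw [intervalIntegral.integral_symm y y', ← sub_eq_add_neg, abs_sub_comm x x',
    abs_sub_comm y y'] at hloop
  exact hloop.mono (by linarith)

/-! ### The model -/

/-- The structure on `(-1/2, 1/2) × (-1, 1) × ℝ` with `ψ = x₁² x₂ ^ b` and `φ = 1 - x₁ x₂ ^ a`, that
is with `α ≡ 1`. -/
@[simps]
def powerModel (a b : ℕ) : SubRiemannianStructure where
  domain := Ioo (-(1 / 2)) (1 / 2) ×ˢ Ioo (-1) 1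
  φ p := 1 - p.1 * p.2 ^ a
  ψ p := p.1 ^ 2 * p.2 ^ b
  continuous_φ := by fun_prop
  continuous_ψ := by fun_prop

lemma convex_domain_powerModel (a b : ℕ) : Convex ℝ (powerModel a b).domain :=
  (convex_Ioo _ _).prod (convex_Ioo _ _)

lemma powerModel_φ_le_one {a b : ℕ} {x y : ℝ} (hx : 0 ≤ x) (hy : 0 ≤ y) :
    (powerModel a b).φ (x, y) ≤ 1 :=
  sub_le_self 1 (mul_nonneg hx (pow_nonneg hy a))

lemma reachableWithin_axis {a b : ℕ} {p q z : ℝ} (hp : 0 ≤ p) (hpq : p ≤ q) (hq : q < 1) :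
    (powerModel a b).ReachableWithin (q - p) (0, p, z) (0, q, z) := by
  have hsegment := reachableWithin_segment₂ (x := 0) (p := p) (q := q) (z := z)
    (convex_domain_powerModel a b)
    ⟨by norm_num, by linarith, by linarith⟩ ⟨by norm_num, by linarith, by linarith⟩
    (by simp)
  simpa [abs_of_nonneg (sub_nonneg.2 hpq)] using hsegment

lemma reachableWithin_loop {a b : ℕ} {k y y' z : ℝ} (hk : k ∈ Ico 0 (1 / 2)) (hy' : 0 ≤ y')
    (hyy' : y' ≤ y) (hy : y < 1) :
    (powerModel a b).ReachableWithin (2 * k + 2 * (y - y')) (0, y, z)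
      (0, y, z - k ^ 2 * ((y ^ (b + 1) - y' ^ (b + 1)) / (b + 1))) := by
  have hmem : ∀ x ∈ Ico 0 (1 / 2), ∀ v ∈ Icc y' y, (x, v) ∈ (powerModel a b).domain :=
    fun x hx v hv ↦ ⟨⟨by linarith [hx.1], hx.2⟩, by linarith [hv.1], hv.2.trans_lt hy⟩
  have hφ : ∀ x, 0 ≤ x → ∀ v ∈ uIcc y y', (powerModel a b).φ (x, v) ≤ 1 := fun x hx v hv ↦
    powerModel_φ_le_one hx (hy'.trans (uIcc_of_ge hyy' ▸ hv).1)
  have h0 : (0 : ℝ) ∈ Ico 0 (1 / 2) := by norm_num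
  have hleft : y' ∈ Icc y' y := left_mem_Icc.2 hyy'
  have hright : y ∈ Icc y' y := right_mem_Icc.2 hyy'
  have hrectangle := reachableWithin_rectangle (z := z) (convex_domain_powerModel a b)
    (hmem 0 h0 y hright) (hmem k hk y hright) (hmem 0 h0 y' hleft) (hmem k hk y' hleft)
    (hφ 0 le_rfl) (hφ k hk.1)
  have hψ : z + (∫ v in y..y', (powerModel a b).ψ (k, v)) -
      ∫ v in y..y', (powerModel a b).ψ (0, v) =
      z - k ^ 2 * ((y ^ (b + 1) - y' ^ (b + 1)) / (b + 1)) := by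
    simp only [powerModel_ψ, intervalIntegral.integral_const_mul, integral_pow]
    ring
  rwa [hψ, sub_zero, abs_of_nonneg hk.1, abs_sub_comm y' y,
    abs_of_nonneg (sub_nonneg.2 hyy')] at hrectangle

lemma reachableWithin_height_zero {a b : ℕ} {ε r z : ℝ} (hε : ε < 1) (hr : 0 < r) (hrε : r ≤ ε)
    (hr2 : r < 1 / 2) (hz : 0 ≤ z) (hzr : z ≤ r ^ 3 * ε ^ b / (b + 1)) :
    (powerModel a b).ReachableWithin (4 * r) (0, ε, z) (0, ε, 0) := by
  have hε0 : 0 < ε := hr.trans_le hrε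
  have hdrop : r * ε ^ b / (b + 1) ≤ (ε ^ (b + 1) - (ε - r) ^ (b + 1)) / (b + 1) := by
    gcongr
    simpa using sub_mul_pow_le_pow_succ_sub_pow_succ (sub_nonneg.2 hrε) (sub_le_self ε hr.le) b
  have hdrop_pos : 0 < (ε ^ (b + 1) - (ε - r) ^ (b + 1)) / (b + 1) :=
    lt_of_lt_of_le (by positivity) hdrop
  obtain ⟨k, ⟨hk0, hkr⟩, hkz⟩ := exists_sq_mul_eq hz hdrop_pos hr.le <|
    calc z ≤ r ^ 3 * ε ^ b / (b + 1) := hzr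
      _ = r ^ 2 * (r * ε ^ b / (b + 1)) := by ring
      _ ≤ r ^ 2 * ((ε ^ (b + 1) - (ε - r) ^ (b + 1)) / (b + 1)) := by gcongr
  have hloop := reachableWithin_loop (a := a) (b := b) (z := z) ⟨hk0, hkr.trans_lt hr2⟩
    (sub_nonneg.2 hrε) (sub_le_self ε hr.le) hε
  rw [hkz, sub_self] at hloop
  exact hloop.mono (by linarith)

lemma reachableWithin_parabola {a b : ℕ} {s c : ℝ} (hs : 0 < s) (hs1 : s < 1)
    (hc : 0 ≤ c) (hc1 : c ≤ 1) :
    (powerModel a b).ReachableWithin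
      (s + c ^ 2 * s ^ 3 / 6 - c / 2 * (s ^ (a + 3) / ((a + 2) * (a + 3)))) (0, 0, 0)
      (0, s, ∫ t in 0..s, (c * (t * (s - t))) ^ 2 * t ^ b) := by
  have hderiv : ∀ t, HasDerivAt (fun t ↦ c * (t * (s - t))) (c * (s - 2 * t)) t := fun t ↦
    (((hasDerivAt_id t).mul ((hasDerivAt_id t).const_sub s)).const_mul c).congr_deriv (by
      simp only [id]; ring)
  have hheight : ∀ t ∈ Icc 0 s, c * (t * (s - t)) ∈ Icc 0 (1 / 4) := fun t ht ↦ by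
    obtain ⟨h0, h1⟩ := parabola_mem_Icc ht
    refine ⟨mul_nonneg hc h0, ?_⟩
    calc c * (t * (s - t)) ≤ 1 * (s ^ 2 / 4) := by gcongr
      _ ≤ 1 / 4 := by linarith [pow_le_one₀ hs.le hs1.le (n := 2)]
  have hmem : ∀ t ∈ Icc 0 s, (c * (t * (s - t)), t) ∈ (powerModel a b).domain := fun t ht ↦
    ⟨⟨by linarith [(hheight t ht).1], by linarith [(hheight t ht).2]⟩,
      by linarith [ht.1], ht.2.trans_lt hs1⟩
  have hφ : ∀ t ∈ Icc 0 s, 0 ≤ (powerModel a b).φ (c * (t * (s - t)), t) := fun t ht ↦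
    sub_nonneg.2 (mul_le_one₀ (by linarith [(hheight t ht).2]) (pow_nonneg ht.1 a)
      (pow_le_one₀ ht.1 (ht.2.trans hs1.le)))
  have hgraph := reachableWithin_graph (z := 0) hs hderiv (by fun_prop) hmem hφ
  simp only [powerModel_φ, integral_parabola_energy] at hgraph
  simpa using hgraph

lemma exists_reachableWithin_sub_pow (a b : ℕ) :
    ∃ K ∈ Ioc (0 : ℝ) 1, ∀ s ∈ Ioo (0 : ℝ) 1, ∃ z ∈ Icc 0 (s ^ (2 * a + b + 5)),
      (powerModel a b).ReachableWithin (s - K * s ^ (2 * a + 3)) (0, 0, 0) (0, s, z) := by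
  obtain ⟨κ, hκ⟩ : ∃ κ : ℝ, κ = 1 / ((a + 2) * (a + 3)) := ⟨_, rfl⟩
  have hκ0 : 0 < κ := hκ ▸ by positivity
  have hκ1 : κ ≤ 1 := by
    rw [hκ, div_le_one (by positivity)]
    nlinarith [a.cast_nonneg (α := ℝ)]
  have hκ2 : κ ^ 2 ≤ 1 := pow_le_one₀ hκ0.le hκ1
  refine ⟨κ ^ 2 / 3, ⟨by positivity, by linarith⟩, fun s ⟨hs, hs1⟩ ↦ ?_⟩
  have hc1 : κ * s ^ a ≤ 1 := mul_le_one₀ hκ1 (by positivity) (pow_le_one₀ hs.le hs1.le)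
  obtain ⟨hz0, hz1⟩ := integral_parabola_sq_mul_pow_mem_Icc hs.le (κ * s ^ a) b
  refine ⟨_, ⟨hz0, hz1.trans ?_⟩,
    (reachableWithin_parabola hs hs1 (by positivity) hc1).mono (le_of_eq ?_)⟩
  · calc (κ * s ^ a) ^ 2 * s ^ (b + 5) = κ ^ 2 * s ^ (2 * a + b + 5) := by ring
      _ ≤ s ^ (2 * a + b + 5) := mul_le_of_le_one_left (by positivity) hκ2
  · have hgain : κ * s ^ a / 2 * (s ^ (a + 3) / ((a + 2) * (a + 3))) =
        κ ^ 2 / 2 * s ^ (2 * a + 3) := by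
      rw [hκ]
      field_simp
      ring
    rw [hgain]
    ring

lemma exists_reachableWithin_lt {a b : ℕ} (hb : 4 * a + 4 < b) {ε : ℝ} (hε : 0 < ε)
    (hε1 : ε < 1) : ∃ l < ε, (powerModel a b).ReachableWithin l (0, 0, 0) (0, ε, 0) := by
  obtain ⟨K, ⟨hK0, hK1⟩, hshortcut⟩ := exists_reachableWithin_sub_pow a b
  obtain ⟨s, ⟨hs0, hsε⟩, hs⟩ := exists_mem_Ioo_pow_le_mul_pow
    (show 3 * (2 * a + 3) < 2 * a + b + 5 by omega) hε
    (show 0 < (K / 5) ^ 3 * ε ^ b / (b + 1) by positivity)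
  have hs1 : s < 1 := hsε.trans hε1
  obtain ⟨z, ⟨hz0, hz1⟩, hstart⟩ := hshortcut s ⟨hs0, hs1⟩
  obtain ⟨r, hr⟩ : ∃ r, r = K / 5 * s ^ (2 * a + 3) := ⟨_, rfl⟩
  have hr0 : 0 < r := hr ▸ by positivity
  have hrs : r ≤ s / 5 := by
    have hpow : s ^ (2 * a + 3) ≤ s := pow_le_of_le_one hs0.le hs1.le (by omega)
    calc r ≤ 1 / 5 * s := by rw [hr]; gcongr
      _ = s / 5 := by ring
  have hzr : z ≤ r ^ 3 * ε ^ b / (b + 1) := by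
    calc z ≤ (K / 5) ^ 3 * ε ^ b / (b + 1) * s ^ (3 * (2 * a + 3)) := hz1.trans hs
      _ = r ^ 3 * ε ^ b / (b + 1) := by rw [hr]; ring
  have hend : (powerModel a b).ReachableWithin (4 * r) (0, ε, z) (0, ε, 0) :=
    reachableWithin_height_zero hε1 hr0 (by linarith) (by linarith) hz0 hzr
  exact ⟨_, by linarith, (hstart.trans (reachableWithin_axis hs0.le hsε.le hε1)).trans hend⟩

end SubRiemannianStructure

/-- For `a, b ∈ ℕ` with `b > 4a + 4` and `α ≡ 1` (so that
`φ(x) = 1 - x₁x₂^a`), for every `ε ∈ (0,1)` there is a horizontal curve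
`ω : [0,τ] → M` from `(0,0,0)` to `(0,ε,0)` of sub-Riemannian length `< ε`;
hence `γ(t) = (0,t,0)` is not locally length-minimizing at `t = 0`.
Horizontality means `ω₃' = x₁²x₂^b·ω₂'`, encoded via integrable controls
`u₁ = ω₁'`, `u₂ = ω₂'`. -/
theorem statement2 (a b : ℕ) (hb : 4 * a + 4 < b) :
    ∀ ε : ℝ, 0 < ε → ε < 1 →
    ∃ τ : ℝ, 0 < τ ∧
    ∃ ω₁ ω₂ ω₃ u₁ u₂ : ℝ → ℝ,
      IntervalIntegrable u₁ volume 0 τ ∧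
      IntervalIntegrable u₂ volume 0 τ ∧
      IntervalIntegrable (fun s => (ω₁ s) ^ 2 * (ω₂ s) ^ b * u₂ s) volume 0 τ ∧
      (∀ t ∈ Icc (0 : ℝ) τ,
        ω₁ t ∈ Ioo (-(1/2) : ℝ) (1/2) ∧ ω₂ t ∈ Ioo (-1 : ℝ) 1) ∧
      (∀ t ∈ Icc (0 : ℝ) τ, ω₁ t = ω₁ 0 + ∫ s in (0 : ℝ)..t, u₁ s) ∧
      (∀ t ∈ Icc (0 : ℝ) τ, ω₂ t = ω₂ 0 + ∫ s in (0 : ℝ)..t, u₂ s) ∧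
      (∀ t ∈ Icc (0 : ℝ) τ,
        ω₃ t = ω₃ 0 + ∫ s in (0 : ℝ)..t, (ω₁ s) ^ 2 * (ω₂ s) ^ b * u₂ s) ∧
      ω₁ 0 = 0 ∧ ω₂ 0 = 0 ∧ ω₃ 0 = 0 ∧
      ω₁ τ = 0 ∧ ω₂ τ = ε ∧ ω₃ τ = 0 ∧
      (∫ t in (0 : ℝ)..τ,
        Real.sqrt ((u₁ t) ^ 2 +
          (1 - ω₁ t * (ω₂ t) ^ a) * (u₂ t) ^ 2)) < ε := by
  intro ε hε hε1
  obtain ⟨l, hl, ω, hsource, htarget, hlength⟩ :=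
    SubRiemannianStructure.exists_reachableWithin_lt hb hε hε1
  obtain ⟨hx₁, hx₂, hx₃⟩ := ω.source_eq_iff.1 hsource
  obtain ⟨hy₁, hy₂, hy₃⟩ := ω.target_eq_iff.1 htarget
  exact ⟨ω.duration, ω.duration_pos, ω.x₁, ω.x₂, ω.x₃, ω.u₁, ω.u₂,
    ω.isPrimitive₁.intervalIntegrable, ω.isPrimitive₂.intervalIntegrable,
    ω.isPrimitive₃.intervalIntegrable, ω.mem_domain,
    ω.isPrimitive₁.eq_add_integral, ω.isPrimitive₂.eq_add_integral,
    ω.isPrimitive₃.eq_add_integral, hx₁, hx₂, hx₃, hy₁, hy₂, hy₃, hlength.trans_lt hl⟩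
end

section
/- Let b ∈ ℕ be even and let ε > 0 satisfy (2+b)·8^{b/2}·ε^{b/2} ≤ 1. Let ω = (ω₁,ω₂) : [0,τ] → ℝ² be a Lipschitz curve with |ω₁'(t)| ≤ 2 and |ω₂'(t)| ≤ 2 for almost every t, with |ω₁(t)| ≤ 8ε and |ω₂(t)| ≤ 8ε for all t ∈ [0,τ], and such that P(0) = P(τ) = 0, where P(t) := ω₁(t)·ω₂(t)^{b/2}. Set β := max_{t∈[0,τ]} |P(t)|. Then ∫₀^τ ω₁(t)²·ω₂(t)^b dt ≥ β³/8. -/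
open Set MeasureTheory

/-!
The norm of a `K`-Lipschitz function `f` stays above the tent of slope `K` with apex at any chosen
point `c`. If `f` vanishes at both endpoints of the interval, the tent fits inside it, so
`∫ ‖f‖ ^ p` is at least the integral `2 ‖f c‖ ^ (p + 1) / ((p + 1) K)` of the `p`-th power of the
tent. The theorem is the case `p = 2`, `f = ω₁ ω₂ ^ (b / 2)`; since `|ω₁|, |ω₂| ≤ 8 ε`, the product
rule makes `f` Lipschitz with constant `(2 + b) (8 ε) ^ (b / 2) ≤ 1`.
-/

open scoped NNReal

section Lipschitz

variable {X R : Type*} [PseudoMetricSpace X] {s : Set X} {f g : X → R} {K L M N : ℝ≥0}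

theorem norm_sub_mul_dist_le_norm [SeminormedAddCommGroup R] (hf : LipschitzOnWith K f s)
    {x y : X} (hx : x ∈ s) (hy : y ∈ s) : ‖f x‖ - K * dist x y ≤ ‖f y‖ := by
  have hxy := hf.dist_le_mul x hx y hy
  rw [dist_eq_norm] at hxy
  linarith [norm_sub_norm_le (f x) (f y)]

theorem lipschitzOnWith_mul_of_norm_le [NonUnitalSeminormedRing R]
    (hf : LipschitzOnWith K f s) (hg : LipschitzOnWith L g s)
    (hfM : ∀ x ∈ s, ‖f x‖ ≤ M) (hgN : ∀ x ∈ s, ‖g x‖ ≤ N) :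
    LipschitzOnWith (K * N + M * L) (fun x => f x * g x) s := by
  refine LipschitzOnWith.of_dist_le_mul fun x hx y hy => ?_
  have hfxy : ‖f x - f y‖ ≤ K * dist x y := by
    simpa only [dist_eq_norm] using hf.dist_le_mul x hx y hy
  have hgxy : ‖g x - g y‖ ≤ L * dist x y := by
    simpa only [dist_eq_norm] using hg.dist_le_mul x hx y hy
  calc dist (f x * g x) (f y * g y)
      = ‖(f x - f y) * g x + f y * (g x - g y)‖ := by
        rw [dist_eq_norm, sub_mul, mul_sub, sub_add_sub_cancel]
    _ ≤ ‖f x - f y‖ * ‖g x‖ + ‖f y‖ * ‖g x - g y‖ :=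
        norm_add_le_of_le (norm_mul_le _ _) (norm_mul_le _ _)
    _ ≤ (K * dist x y) * N + M * (L * dist x y) := by
        gcongr
        exacts [hgN x hx, hfM y hy]
    _ = ↑(K * N + M * L) * dist x y := by push_cast; ring

theorem lipschitzOnWith_pow_of_norm_le [SeminormedRing R] [NormOneClass R]
    (hf : LipschitzOnWith K f s) (hfM : ∀ x ∈ s, ‖f x‖ ≤ M) (k : ℕ) :
    LipschitzOnWith (k * K * M ^ (k - 1)) (fun x => f x ^ k) s := by
  induction k with
  | zero => simpa using (LipschitzWith.const (1 : R)).lipschitzOnWith (s := s)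
  | succ k ih =>
    have hpow : ∀ x ∈ s, ‖f x ^ k‖ ≤ ↑(M ^ k) := fun x hx => by
      rw [NNReal.coe_pow]
      exact (norm_pow_le _ _).trans (pow_le_pow_left₀ (norm_nonneg _) (hfM x hx) k)
    have hconst : k * K * M ^ (k - 1) * M + M ^ k * K = (k + 1 : ℕ) * K * M ^ (k + 1 - 1) := by
      cases k with
      | zero => simp
      | succ n => push_cast [Nat.add_sub_cancel]; ring
    simpa only [pow_succ, hconst] using lipschitzOnWith_mul_of_norm_le ih hf hpow hfM

end Lipschitz

section IntegralNormPow

variable {E : Type*} [SeminormedAddCommGroup E] {f : ℝ → E} {K : ℝ≥0} {a b c : ℝ}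

theorem intervalIntegrable_norm_pow_of_lipschitzOnWith (hab : a ≤ b)
    (hf : LipschitzOnWith K f (Icc a b)) (p : ℕ) :
    IntervalIntegrable (fun t => ‖f t‖ ^ p) volume a b :=
  (hf.continuousOn.norm.pow p).intervalIntegrable_of_Icc hab

theorem mul_integral_mul_sub_left_pow (k a b : ℝ) (p : ℕ) :
    k * ∫ t in a..b, (k * (t - a)) ^ p = (k * (b - a)) ^ (p + 1) / (p + 1) := by
  simp only [mul_sub]
  rw [intervalIntegral.mul_integral_comp_mul_sub (f := fun x => x ^ p), integral_pow, sub_self,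
    zero_pow p.succ_ne_zero, sub_zero]

theorem norm_pow_succ_le_integral_of_left_eq_zero (hab : a ≤ b)
    (hf : LipschitzOnWith K f (Icc a b)) (ha : f a = 0) (p : ℕ) :
    ‖f b‖ ^ (p + 1) ≤ (p + 1) * K * ∫ t in a..b, ‖f t‖ ^ p := by
  have htent : ∀ t ∈ Icc a b, ‖f b‖ - K * (b - t) ≤ ‖f t‖ := fun t ht => by
    simpa only [Real.dist_eq, abs_of_nonneg (sub_nonneg.2 ht.2)] using
      norm_sub_mul_dist_le_norm hf (right_mem_Icc.2 hab) ht
  obtain ⟨r, hr, hKr⟩ : ∃ r ∈ Icc a b, K * (b - r) = ‖f b‖ := by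
    have hcont : ContinuousOn (fun r : ℝ => K * (b - r)) (Icc a b) := by fun_prop
    refine intermediate_value_Icc' hab hcont ⟨by simp, ?_⟩
    simpa [ha] using htent a (left_mem_Icc.2 hab)
  have hsub : Icc r b ⊆ Icc a b := Icc_subset_Icc_left hr.1
  calc ‖f b‖ ^ (p + 1)
      = (p + 1) * (K * ∫ t in r..b, (K * (t - r)) ^ p) := by
        rw [mul_integral_mul_sub_left_pow, hKr, mul_div_cancel₀ _ (by positivity)]
    _ ≤ (p + 1) * (K * ∫ t in r..b, ‖f t‖ ^ p) := by
        gcongr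
        refine intervalIntegral.integral_mono_on hr.2
          (Continuous.intervalIntegrable (by fun_prop) _ _)
          (intervalIntegrable_norm_pow_of_lipschitzOnWith hr.2 (hf.mono hsub) p) fun t ht => ?_
        refine pow_le_pow_left₀ (mul_nonneg K.coe_nonneg (sub_nonneg.2 ht.1)) ?_ p
        linarith [htent t (hsub ht)]
    _ ≤ (p + 1) * (K * ∫ t in a..b, ‖f t‖ ^ p) := by
        gcongr
        exact intervalIntegral.integral_mono_interval hr.1 hr.2 le_rfl
          (.of_forall fun t => pow_nonneg (norm_nonneg _) p)
          (intervalIntegrable_norm_pow_of_lipschitzOnWith hab hf p)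
    _ = (p + 1) * K * ∫ t in a..b, ‖f t‖ ^ p := (mul_assoc _ _ _).symm

theorem norm_pow_succ_le_integral_of_right_eq_zero (hab : a ≤ b)
    (hf : LipschitzOnWith K f (Icc a b)) (hb : f b = 0) (p : ℕ) :
    ‖f a‖ ^ (p + 1) ≤ (p + 1) * K * ∫ t in a..b, ‖f t‖ ^ p := by
  have hneg : LipschitzOnWith K (fun t => f (-t)) (Icc (-b) (-a)) := by
    refine LipschitzOnWith.of_dist_le_mul fun s hs t ht => ?_
    simpa only [dist_neg_neg] using hf.dist_le_mul (-s) ⟨le_neg.1 hs.2, neg_le.1 hs.1⟩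
      (-t) ⟨le_neg.1 ht.2, neg_le.1 ht.1⟩
  simpa [intervalIntegral.integral_comp_neg (fun t => ‖f t‖ ^ p)] using
    norm_pow_succ_le_integral_of_left_eq_zero (neg_le_neg hab) hneg (by simpa using hb) p

theorem two_mul_norm_pow_succ_le_integral (hf : LipschitzOnWith K f (Icc a b))
    (ha : f a = 0) (hb : f b = 0) (hc : c ∈ Icc a b) (p : ℕ) :
    2 * ‖f c‖ ^ (p + 1) ≤ (p + 1) * K * ∫ t in a..b, ‖f t‖ ^ p := by
  have hfl := hf.mono (Icc_subset_Icc_right hc.2)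
  have hfr := hf.mono (Icc_subset_Icc_left hc.1)
  rw [← intervalIntegral.integral_add_adjacent_intervals
    (intervalIntegrable_norm_pow_of_lipschitzOnWith hc.1 hfl p)
    (intervalIntegrable_norm_pow_of_lipschitzOnWith hc.2 hfr p), two_mul, mul_add]
  exact add_le_add (norm_pow_succ_le_integral_of_left_eq_zero hc.1 hfl ha p)
    (norm_pow_succ_le_integral_of_right_eq_zero hc.2 hfr hb p)

end IntegralNormPow

theorem two_mul_abs_mul_pow_pow_three_le_integral {K₁ K₂ M₁ M₂ : ℝ≥0} {a b c : ℝ}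
    {ω₁ ω₂ : ℝ → ℝ} (k : ℕ)
    (hlip₁ : LipschitzOnWith K₁ ω₁ (Icc a b)) (hlip₂ : LipschitzOnWith K₂ ω₂ (Icc a b))
    (hbd₁ : ∀ t ∈ Icc a b, |ω₁ t| ≤ M₁) (hbd₂ : ∀ t ∈ Icc a b, |ω₂ t| ≤ M₂)
    (hPa : ω₁ a * ω₂ a ^ k = 0) (hPb : ω₁ b * ω₂ b ^ k = 0) (hc : c ∈ Icc a b) :
    2 * |ω₁ c * ω₂ c ^ k| ^ 3 ≤
      3 * (K₁ * M₂ ^ k + M₁ * (k * K₂ * M₂ ^ (k - 1))) *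
        ∫ t in a..b, ω₁ t ^ 2 * ω₂ t ^ (2 * k) := by
  have hpow : ∀ t ∈ Icc a b, ‖ω₂ t ^ k‖ ≤ ↑(M₂ ^ k) := fun t ht => by
    simpa using pow_le_pow_left₀ (abs_nonneg _) (hbd₂ t ht) k
  have hP := lipschitzOnWith_mul_of_norm_le hlip₁
    (lipschitzOnWith_pow_of_norm_le hlip₂ hbd₂ k) hbd₁ hpow
  have hsq : ∀ t, ω₁ t ^ 2 * ω₂ t ^ (2 * k) = ‖ω₁ t * ω₂ t ^ k‖ ^ 2 := fun t => by
    rw [Real.norm_eq_abs, sq_abs, mul_pow, ← pow_mul, mul_comm k]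
  simp only [hsq]
  exact_mod_cast two_mul_norm_pow_succ_le_integral hP hPa hPb hc 2

theorem statement8_general {b : ℕ} (hb : Even b) {ε τ c : ℝ} {ω₁ ω₂ : ℝ → ℝ}
    (hlip₁ : LipschitzOnWith 2 ω₁ (Icc 0 τ)) (hlip₂ : LipschitzOnWith 2 ω₂ (Icc 0 τ))
    (hbd : ∀ t ∈ Icc 0 τ, |ω₁ t| ≤ 8 * ε ∧ |ω₂ t| ≤ 8 * ε)
    (hP0 : ω₁ 0 * ω₂ 0 ^ (b / 2) = 0) (hPτ : ω₁ τ * ω₂ τ ^ (b / 2) = 0) (hc : c ∈ Icc 0 τ) :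
    2 * |ω₁ c * ω₂ c ^ (b / 2)| ^ 3 ≤
      3 * ((2 + b) * 8 ^ (b / 2) * ε ^ (b / 2)) * ∫ t in (0 : ℝ)..τ, ω₁ t ^ 2 * ω₂ t ^ b := by
  have hε : 0 ≤ ε := by linarith [abs_nonneg (ω₁ c), (hbd c hc).1]
  lift ε to ℝ≥0 using hε
  obtain ⟨k, rfl⟩ := hb.two_dvd
  rw [Nat.mul_div_cancel_left k two_pos] at hP0 hPτ ⊢
  have hconst : (2 : ℝ) * (8 * ε) ^ k + 8 * ε * (k * 2 * (8 * ε) ^ (k - 1)) =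
      (2 + (2 * k : ℕ)) * 8 ^ k * ε ^ k := by
    cases k with
    | zero => simp
    | succ n => push_cast [Nat.add_sub_cancel]; ring
  rw [← hconst]
  exact two_mul_abs_mul_pow_pow_three_le_integral (M₁ := 8 * ε) (M₂ := 8 * ε) k hlip₁ hlip₂
    (fun t ht => (hbd t ht).1) (fun t ht => (hbd t ht).2) hP0 hPτ hc

/-- Let `b` be even and `ε > 0` with `(2+b)·8^(b/2)·ε^(b/2) ≤ 1`. Let
`ω = (ω₁,ω₂) : [0,τ] → ℝ²` be a Lipschitz curve with `|ω₁'| ≤ 2` and `|ω₂'| ≤ 2` a.e.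
(equivalently, each component is `2`-Lipschitz on `[0,τ]`), with `|ω₁|, |ω₂| ≤ 8ε` on
`[0,τ]`, and with `P(0) = P(τ) = 0` where `P(t) = ω₁(t)·ω₂(t)^(b/2)`. If
`β = max_{[0,τ]} |P|`, then `∫₀^τ ω₁²ω₂^b ≥ β³/8`. -/
theorem statement8 (b : ℕ) (hb : Even b)
    (ε : ℝ) (hε : 0 < ε)
    (hεb : ((2 : ℝ) + b) * 8 ^ (b / 2) * ε ^ (b / 2) ≤ 1)
    (τ : ℝ) (hτ : 0 ≤ τ)
    (ω₁ ω₂ : ℝ → ℝ)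
    (hlip₁ : LipschitzOnWith 2 ω₁ (Icc 0 τ))
    (hlip₂ : LipschitzOnWith 2 ω₂ (Icc 0 τ))
    (hbd : ∀ t ∈ Icc (0 : ℝ) τ, |ω₁ t| ≤ 8 * ε ∧ |ω₂ t| ≤ 8 * ε)
    (hP0 : ω₁ 0 * (ω₂ 0) ^ (b / 2) = 0)
    (hPτ : ω₁ τ * (ω₂ τ) ^ (b / 2) = 0)
    (β : ℝ)
    (hβ : IsGreatest ((fun t => |ω₁ t * (ω₂ t) ^ (b / 2)|) '' Icc (0 : ℝ) τ) β) :
    β ^ 3 / 8 ≤ ∫ t in (0 : ℝ)..τ, (ω₁ t) ^ 2 * (ω₂ t) ^ b := by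
  obtain ⟨⟨c, hc, rfl⟩, -⟩ := hβ
  have hint : 0 ≤ ∫ t in (0 : ℝ)..τ, ω₁ t ^ 2 * ω₂ t ^ b :=
    intervalIntegral.integral_nonneg hτ fun t _ => mul_nonneg (sq_nonneg _) (hb.pow_nonneg _)
  linarith [statement8_general hb hlip₁ hlip₂ hbd hP0 hPτ hc,
    mul_le_mul_of_nonneg_right hεb hint, pow_nonneg (abs_nonneg (ω₁ c * ω₂ c ^ (b / 2))) 3]
end
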